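/- Let m ∈ ℕ with m ≥ 2 and ε ∈ (0, 1/2). For any z ∈ ℂ_1^n such that ℓ_1(z, z*) ≤ ε² and any V ∈ 𝒱_m such that ℓ_m(V, z*) ≤ ε², one has ℓ_m(V Yᴴ, Y z) ≤ n²·(6ε + σ‖W‖/n)²·ℓ_m(V, z). -/

import Mathlib

open scoped Classical
open Matrix

noncomputable section

namespace PhaseSync

/-- Euclidean norm of a complex vector. -/
def enorm {k : ℕ} (v : Fin k → ℂ) : ℝ := Real.sqrt (∑ i, ‖v i‖ ^ 2)

/-- Frobenius norm of a complex matrix. -/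
def fnorm {k l : ℕ} (A : Matrix (Fin k) (Fin l) ℂ) : ℝ :=
  Real.sqrt (∑ i, ∑ j, ‖A i j‖ ^ 2)

/-- L2 operator norm of a square complex matrix. -/
def opNorm {k : ℕ} (A : Matrix (Fin k) (Fin k) ℂ) : ℝ :=
  ‖Matrix.toEuclideanCLM (𝕜 := ℂ) (n := Fin k) A‖

/-- Indicator function of a proposition. -/
def ind (P : Prop) : ℝ := if P then 1 else 0

/-- The loss ℓ_m(V, z) = min_{a : ‖a‖=1} ‖V - a zᴴ‖_F² / n. -/
def lossM {k l : ℕ} (V : Matrix (Fin k) (Fin l) ℂ) (z : Fin l → ℂ) : ℝ :=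
  sInf { r : ℝ | ∃ a : Fin k → ℂ, enorm a = 1 ∧
    r = fnorm (V - Matrix.vecMulVec a (star z)) ^ 2 / l }

/-- The loss ℓ_1(z', z) = min_{|a|=1} ‖z' - a z‖² / n. -/
def loss1 {l : ℕ} (z' z : Fin l → ℂ) : ℝ :=
  sInf { r : ℝ | ∃ a : ℂ, ‖a‖ = 1 ∧ r = enorm (z' - a • z) ^ 2 / l }

/-- The mapping F₁: entrywise normalization of Y z. -/
def F1 {l : ℕ} (Y : Matrix (Fin l) (Fin l) ℂ) (z : Fin l → ℂ) : Fin l → ℂ :=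
  fun j => if Y.mulVec z j ≠ 0 then Y.mulVec z j / (‖Y.mulVec z j‖ : ℂ) else z j

/-- jth column of a matrix. -/
def col {k l : ℕ} (A : Matrix (Fin k) (Fin l) ℂ) (j : Fin l) : Fin k → ℂ := fun i => A i j

/-- The mapping F_m: columnwise normalization of V Yᴴ. -/
def Fm {k l : ℕ} (Y : Matrix (Fin l) (Fin l) ℂ) (V : Matrix (Fin k) (Fin l) ℂ) :
    Matrix (Fin k) (Fin l) ℂ :=
  Matrix.of fun i j =>
    if col (V * Yᴴ) j ≠ 0 then (V * Yᴴ) i j / ((enorm (col (V * Yᴴ) j) : ℝ) : ℂ) else V i j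

/-- g_t(x) = x / max(|x|, t). -/
def gfun (t : ℝ) (x : ℂ) : ℂ := x / ((max ‖x‖ t : ℝ) : ℂ)

/-- The mapping G(z, s, t), coordinatewise g_t(z*_j s + σ [W z]_j). -/
def G {l : ℕ} (zstar : Fin l → ℂ) (σ : ℝ) (W : Matrix (Fin l) (Fin l) ℂ)
    (z : Fin l → ℂ) (s : ℂ) (t : ℝ) : Fin l → ℂ :=
  fun j => gfun t (zstar j * s + (σ : ℂ) * W.mulVec z j)

/-- The mapping F₁'(z, s), entrywise normalization of z* s + σ W z. -/
def F1' {l : ℕ} (zstar : Fin l → ℂ) (σ : ℝ) (W : Matrix (Fin l) (Fin l) ℂ)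
    (z : Fin l → ℂ) (s : ℂ) : Fin l → ℂ :=
  fun j =>
    if zstar j * s + (σ : ℂ) * W.mulVec z j ≠ 0 then
      (zstar j * s + (σ : ℂ) * W.mulVec z j) /
        ((‖zstar j * s + (σ : ℂ) * W.mulVec z j‖ : ℝ) : ℂ)
    else z j

/-- W with jth row and column zeroed out. -/
def Wminus {l : ℕ} (W : Matrix (Fin l) (Fin l) ℂ) (j : Fin l) : Matrix (Fin l) (Fin l) ℂ :=
  Matrix.of fun k i => if k = j ∨ i = j then 0 else W k i

lemma sq_le_imp {x y : ℝ} (h : x ^ 2 ≤ y ^ 2) (hy : 0 ≤ y) : x ≤ y :=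
  abs_le_of_sq_le_sq' h hy |>.2

lemma enorm_eq_norm {k : ℕ} (v : Fin k → ℂ) : enorm v = ‖WithLp.toLp 2 v‖ := by
  rw [EuclideanSpace.norm_eq]; rfl

lemma enorm_sq {k : ℕ} (v : Fin k → ℂ) : enorm v ^ 2 = ∑ i, ‖v i‖ ^ 2 := by
  unfold enorm
  exact Real.sq_sqrt (by positivity)

lemma fnorm_sq {k l : ℕ} (A : Matrix (Fin k) (Fin l) ℂ) :
    fnorm A ^ 2 = ∑ i, ∑ j, ‖A i j‖ ^ 2 := by
  unfold fnorm
  exact Real.sq_sqrt (by positivity)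

lemma enorm_nonneg' {k : ℕ} (v : Fin k → ℂ) : 0 ≤ enorm v := Real.sqrt_nonneg _

lemma fnorm_nonneg {k l : ℕ} (A : Matrix (Fin k) (Fin l) ℂ) : 0 ≤ fnorm A := Real.sqrt_nonneg _

section
attribute [local instance] Matrix.frobeniusNormedAddCommGroup

lemma fnorm_eq_norm {k l : ℕ} (A : Matrix (Fin k) (Fin l) ℂ) : fnorm A = ‖A‖ := by
  rw [Matrix.frobenius_norm_def, fnorm, Real.sqrt_eq_rpow]
  simp

lemma fnorm_add_le {k l : ℕ} (A B : Matrix (Fin k) (Fin l) ℂ) :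
    fnorm (A + B) ≤ fnorm A + fnorm B := by
  simp only [fnorm_eq_norm]; exact norm_add_le _ _

lemma fnorm_sub_le {k l : ℕ} (A B : Matrix (Fin k) (Fin l) ℂ) :
    fnorm (A - B) ≤ fnorm A + fnorm B := by
  simp only [fnorm_eq_norm]; exact norm_sub_le _ _
end

lemma enorm_sub_le {k : ℕ} (u v : Fin k → ℂ) : enorm (u - v) ≤ enorm u + enorm v := by
  simp only [enorm_eq_norm]; exact norm_sub_le _ _

lemma enorm_smul {k : ℕ} (c : ℂ) (v : Fin k → ℂ) : enorm (c • v) = ‖c‖ * enorm v := by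
  simp only [enorm_eq_norm]; exact norm_smul c (WithLp.toLp 2 v)

lemma fnorm_smul {k l : ℕ} (c : ℂ) (A : Matrix (Fin k) (Fin l) ℂ) :
    fnorm (c • A) = ‖c‖ * fnorm A := by
  rw [← sq_eq_sq₀ (fnorm_nonneg _) (mul_nonneg (norm_nonneg _) (fnorm_nonneg _)), mul_pow,
    fnorm_sq, fnorm_sq]
  simp [mul_pow, Finset.mul_sum]

lemma fnorm_vecMulVec {k l : ℕ} (a : Fin k → ℂ) (b : Fin l → ℂ) :
    fnorm (Matrix.vecMulVec a (star b)) = enorm a * enorm b := by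
  rw [← sq_eq_sq₀ (fnorm_nonneg _) (mul_nonneg (enorm_nonneg' _) (enorm_nonneg' _)), mul_pow,
    fnorm_sq, enorm_sq, enorm_sq, Finset.sum_mul_sum]
  simp [Matrix.vecMulVec_apply, mul_pow]

/-- Cauchy-Schwarz. -/
lemma cs_norm {k : ℕ} (u v : Fin k → ℂ) : ‖∑ i, u i * v i‖ ≤ enorm u * enorm v := by
  have h := norm_inner_le_norm (𝕜 := ℂ) (WithLp.toLp 2 (star u)) (WithLp.toLp 2 v)
  rw [← enorm_eq_norm, ← enorm_eq_norm] at h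
  have h1 : enorm (star u) = enorm u := by simp [enorm]
  rw [h1] at h
  simpa [PiLp.inner_apply, mul_comm] using h

lemma enorm_mulVec_le {k l : ℕ} (A : Matrix (Fin k) (Fin l) ℂ) (v : Fin l → ℂ) :
    enorm (A.mulVec v) ≤ fnorm A * enorm v := by
  apply sq_le_imp _ (mul_nonneg (fnorm_nonneg _) (enorm_nonneg' _))
  rw [mul_pow, enorm_sq, fnorm_sq, Finset.sum_mul]
  apply Finset.sum_le_sum
  intro i _
  have := cs_norm (A i) v
  have h2 := pow_le_pow_left₀ (norm_nonneg _) this 2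
  rw [mul_pow, enorm_sq (A i)] at h2
  exact h2

lemma enorm_op_le {k : ℕ} (A : Matrix (Fin k) (Fin k) ℂ) (v : Fin k → ℂ) :
    enorm (A.mulVec v) ≤ opNorm A * enorm v := by
  have h := (Matrix.toEuclideanCLM (𝕜 := ℂ) (n := Fin k) A).le_opNorm (WithLp.toLp 2 v)
  rw [enorm_eq_norm, enorm_eq_norm]
  simpa [opNorm] using h

lemma fnorm_conjTranspose {k l : ℕ} (A : Matrix (Fin k) (Fin l) ℂ) : fnorm Aᴴ = fnorm A := by
  unfold fnorm
  rw [Finset.sum_comm]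
  simp

lemma opNorm_nonneg {k : ℕ} (A : Matrix (Fin k) (Fin k) ℂ) : 0 ≤ opNorm A := norm_nonneg _

lemma fnorm_op_mul_le {k l : ℕ} (A : Matrix (Fin k) (Fin k) ℂ) (B : Matrix (Fin k) (Fin l) ℂ) :
    fnorm (A * B) ≤ opNorm A * fnorm B := by
  apply sq_le_imp _ (mul_nonneg (opNorm_nonneg _) (fnorm_nonneg _))
  rw [mul_pow, fnorm_sq, fnorm_sq, Finset.sum_comm, Finset.sum_comm (γ := Fin k), Finset.mul_sum]
  apply Finset.sum_le_sum
  intro j _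
  have h2 := pow_le_pow_left₀ (enorm_nonneg' _) (enorm_op_le A (fun i => B i j)) 2
  rw [mul_pow, enorm_sq, enorm_sq] at h2
  exact h2

lemma fnorm_mul_op_le {k l : ℕ} (A : Matrix (Fin k) (Fin k) ℂ) (B : Matrix (Fin l) (Fin k) ℂ) :
    fnorm (B * Aᴴ) ≤ opNorm A * fnorm B := by
  have h := fnorm_op_mul_le A Bᴴ
  rw [fnorm_conjTranspose, ← fnorm_conjTranspose, Matrix.conjTranspose_mul,
    Matrix.conjTranspose_conjTranspose] at h
  exact h

lemma fnorm_expand {k l : ℕ} (V : Matrix (Fin k) (Fin l) ℂ) (a : Fin k → ℂ) (z : Fin l → ℂ)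
    (hV : ∀ j, enorm (col V j) = 1) (hz : ∀ j, ‖z j‖ = 1) (ha : enorm a = 1) :
    fnorm (V - Matrix.vecMulVec a (star z)) ^ 2
      = 2 * l - 2 * (∑ i, star (a i) * V.mulVec z i).re := by
  have hpt : ∀ i j, ‖(V - Matrix.vecMulVec a (star z)) i j‖ ^ 2
      = ‖V i j‖ ^ 2 + ‖a i‖ ^ 2 - 2 * (star (a i) * (V i j * z j)).re := by
    intro i j
    have hzj : (z j).re ^ 2 + (z j).im ^ 2 = 1 := by
      have := Complex.sq_norm (z j)
      rw [hz j, Complex.normSq_apply] at this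
      nlinarith
    simp only [Complex.sq_norm, Complex.normSq_apply, Matrix.sub_apply, Matrix.vecMulVec_apply,
      Pi.star_apply, RCLike.star_def, Complex.sub_re, Complex.sub_im, Complex.mul_re,
      Complex.mul_im, Complex.conj_re, Complex.conj_im]
    linear_combination ((a i).re ^ 2 + (a i).im ^ 2) * hzj
  have h1 : ∑ i, ∑ j, ‖V i j‖ ^ 2 = (l : ℝ) := by
    rw [Finset.sum_comm]
    have : ∀ j, ∑ i, ‖V i j‖ ^ 2 = 1 := by
      intro j
      have := enorm_sq (col V j)
      rw [hV j] at this
      simpa [col] using this.symm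
    simp [this]
  have h2 : ∑ i, ‖a i‖ ^ 2 = 1 := by
    rw [← enorm_sq, ha]; norm_num
  rw [fnorm_sq]
  simp only [hpt, Finset.sum_sub_distrib, Finset.sum_add_distrib, h1]
  have h3 : ∑ i : Fin k, ∑ _j : Fin l, ‖a i‖ ^ 2 = (l : ℝ) := by
    simp [← Finset.mul_sum, h2]
  have h4 : ∑ i, ∑ j, 2 * (star (a i) * (V i j * z j)).re
      = 2 * (∑ i, star (a i) * V.mulVec z i).re := by
    simp only [Matrix.mulVec, dotProduct, Finset.mul_sum, Complex.re_sum]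
  rw [h3, h4]; ring

theorem stmt5 {n m : ℕ} (hn : 1 ≤ n) (hm : 2 ≤ m)
    (zstar : Fin n → ℂ) (hzstar : ∀ j, ‖zstar j‖ = 1)
    (σ : ℝ) (hσ : 0 < σ) (W : Matrix (Fin n) (Fin n) ℂ) (hW : W.IsHermitian)
    (Y : Matrix (Fin n) (Fin n) ℂ)
    (hY : Y = Matrix.vecMulVec zstar (star zstar) + (σ : ℂ) • W)
    (ε : ℝ) (hε : 0 < ε ∧ ε < 1 / 2)
    (z : Fin n → ℂ) (hz1 : ∀ j, ‖z j‖ = 1) (hz2 : loss1 z zstar ≤ ε ^ 2)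
    (V : Matrix (Fin m) (Fin n) ℂ) (hV1 : ∀ j, enorm (col V j) = 1)
    (hV2 : lossM V zstar ≤ ε ^ 2) :
    lossM (V * Yᴴ) (Y.mulVec z) ≤ (n : ℝ) ^ 2 * (6 * ε + σ * opNorm W / n) ^ 2 * lossM V z := by
  obtain ⟨hε0, -⟩ := hε
  have hn0 : (0 : ℝ) < n := by exact_mod_cast hn
  obtain ⟨s, hs0, hs⟩ : ∃ s : ℝ, 0 < s ∧ s ^ 2 = n := ⟨√n, by positivity, Real.sq_sqrt hn0.le⟩
  have hlt : ε ^ 2 < (2 * ε) ^ 2 := by nlinarith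
  -- a unit vector
  obtain ⟨e, he⟩ : ∃ e : Fin m → ℂ, enorm e = 1 := by
    refine ⟨Pi.single ⟨0, by omega⟩ 1, ?_⟩
    rw [enorm_eq_norm]
    simp
  obtain ⟨_, ⟨b, hb, rfl⟩, hb2⟩ := exists_lt_of_csInf_lt (s := { r : ℝ | ∃ a : ℂ, ‖a‖ = 1 ∧ r = enorm (z - a • zstar) ^ 2 / n })
    ⟨_, 1, by simp, rfl⟩ (show sInf _ < _ from hz2.trans_lt hlt)
  obtain ⟨_, ⟨a0, ha0, rfl⟩, ha2⟩ := exists_lt_of_csInf_lt (s := { r : ℝ | ∃ a : Fin m → ℂ, enorm a = 1 ∧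
    r = fnorm (V - Matrix.vecMulVec a (star zstar)) ^ 2 / n }) ⟨_, e, he, rfl⟩ (show sInf _ < _ from hV2.trans_lt hlt)
  have hr : enorm (z - b • zstar) ≤ 2 * ε * s := by
    apply sq_le_imp _ (by positivity)
    rw [div_lt_iff₀ hn0] at hb2
    rw [mul_pow, hs]; exact hb2.le
  have hD0 : fnorm (V - Matrix.vecMulVec a0 (star zstar)) ≤ 2 * ε * s := by
    apply sq_le_imp _ (by positivity)
    rw [div_lt_iff₀ hn0] at ha2
    rw [mul_pow, hs]; exact ha2.le
  have hbb : star b * b = 1 := by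
    have := Complex.normSq_eq_conj_mul_self (z := b)
    rw [RCLike.star_def, ← this, Complex.normSq_eq_norm_sq, hb]; simp
  have hes : enorm zstar = s := by
    rw [← sq_eq_sq₀ (enorm_nonneg' _) hs0.le, enorm_sq, hs]; simp [hzstar]
  -- the minimizer
  obtain ⟨c, hc⟩ : ∃ c, c = enorm (V.mulVec z) := ⟨_, rfl⟩
  obtain ⟨a, ha, hac⟩ : ∃ a : Fin m → ℂ, enorm a = 1 ∧ V.mulVec z = (c : ℂ) • a := by
    by_cases h0 : c = 0
    · refine ⟨e, he, ?_⟩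
      have : WithLp.toLp 2 (V.mulVec z) = 0 := by
        rw [← norm_eq_zero, ← enorm_eq_norm, ← hc, h0]
      rw [h0]
      simpa using this
    · refine ⟨((c : ℂ)⁻¹) • V.mulVec z, ?_, ?_⟩
      · rw [enorm_smul, ← hc, norm_inv, Complex.norm_real, Real.norm_eq_abs,
          abs_of_nonneg (hc ▸ enorm_nonneg' _), inv_mul_cancel₀ h0]
      · rw [smul_smul, mul_inv_cancel₀ (by exact_mod_cast h0), one_smul]
  set D := V - Matrix.vecMulVec a (star z) with hD
  have haa : ∑ i, star (a i) * a i = 1 := by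
    have h2 : ∑ i, ‖a i‖ ^ 2 = 1 := by rw [← enorm_sq, ha]; norm_num
    have : ∀ i, star (a i) * a i = ((‖a i‖ ^ 2 : ℝ) : ℂ) := by
      intro i
      rw [RCLike.star_def, ← Complex.normSq_eq_conj_mul_self, Complex.normSq_eq_norm_sq]
    simp only [this]
    rw [← Complex.ofReal_sum, h2]; simp
  have hDsq : fnorm D ^ 2 = 2 * n - 2 * c := by
    rw [hD, fnorm_expand V a z hV1 hz1 ha, hac]
    have : ∑ i, star (a i) * ((c : ℂ) • a) i = (c : ℂ) := by
      trans (c : ℂ) * ∑ i, star (a i) * a i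
      · rw [Finset.mul_sum]
        refine Finset.sum_congr rfl fun i _ => ?_
        rw [Pi.smul_apply, smul_eq_mul]; ring
      · rw [haa, mul_one]
    rw [this]; simp
  have hmin : ∀ a' : Fin m → ℂ, enorm a' = 1 →
      fnorm D ^ 2 ≤ fnorm (V - Matrix.vecMulVec a' (star z)) ^ 2 := by
    intro a' ha'
    rw [hDsq, fnorm_expand V a' z hV1 hz1 ha']
    have h := cs_norm (star a') (V.mulVec z)
    have h1 : enorm (star a') = enorm a' := by simp [enorm]
    rw [h1, ha', one_mul, ← hc] at h
    have h3 := (Complex.re_le_norm _).trans h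
    simp only [Pi.star_apply] at h3
    linarith
  have hloss : lossM V z = fnorm D ^ 2 / n := by
    apply le_antisymm
    · refine csInf_le ⟨0, ?_⟩ ⟨a, ha, rfl⟩
      rintro _ ⟨a', _, rfl⟩
      positivity
    · refine le_csInf ⟨_, a, ha, rfl⟩ ?_
      rintro _ ⟨a', ha', rfl⟩
      exact div_le_div_of_nonneg_right (hmin a' ha') hn0.le
  have hDle : fnorm D ≤ 4 * ε * s := by
    have hba : enorm (b • a0) = 1 := by rw [enorm_smul, hb, ha0, one_mul]
    have h1 : fnorm D ≤ fnorm (V - Matrix.vecMulVec (b • a0) (star z)) :=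
      sq_le_imp (hmin _ hba) (fnorm_nonneg _)
    have h2 : V - Matrix.vecMulVec (b • a0) (star z)
        = (V - Matrix.vecMulVec a0 (star zstar))
          - Matrix.vecMulVec (b • a0) (star (z - b • zstar)) := by
      ext i j
      simp only [Matrix.sub_apply, Matrix.vecMulVec_apply, Pi.smul_apply, Pi.star_apply,
        Pi.sub_apply, smul_eq_mul, star_sub, star_mul']
      linear_combination (-a0 i * star (zstar j)) * hbb
    have h3 := fnorm_sub_le (V - Matrix.vecMulVec a0 (star zstar))
      (Matrix.vecMulVec (b • a0) (star (z - b • zstar)))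
    rw [← h2, fnorm_vecMulVec, hba] at h3
    linarith
  have hDz : enorm (D.mulVec z) = fnorm D ^ 2 / 2 := by
    have hzz : ∀ j, star (z j) * z j = 1 := by
      intro j
      rw [RCLike.star_def, ← Complex.normSq_eq_conj_mul_self, Complex.normSq_eq_norm_sq, hz1 j]
      simp
    have : D.mulVec z = ((c - n : ℝ) : ℂ) • a := by
      rw [hD, Matrix.sub_mulVec, hac]
      ext i
      simp only [Pi.sub_apply, Matrix.mulVec, dotProduct, Matrix.vecMulVec_apply, Pi.star_apply,
        mul_assoc, hzz]
      simp
      ring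
    rw [this, enorm_smul, ha, Complex.norm_real, Real.norm_eq_abs, abs_of_nonpos]
    · linarith
    · nlinarith [sq_nonneg (fnorm D)]
  have hDzs : enorm (D.mulVec zstar) ≤ 4 * ε * s * fnorm D := by
    have h1 : enorm (D.mulVec zstar) = enorm (D.mulVec (b • zstar)) := by
      rw [Matrix.mulVec_smul, enorm_smul, hb, one_mul]
    have h2 : D.mulVec (b • zstar) = D.mulVec z - D.mulVec (z - b • zstar) := by
      rw [Matrix.mulVec_sub]; simp
    have h3 := enorm_sub_le (D.mulVec z) (D.mulVec (z - b • zstar))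
    rw [← h2, ← h1, hDz] at h3
    have h4 := enorm_mulVec_le D (z - b • zstar)
    have h5 := mul_le_mul_of_nonneg_left hr (fnorm_nonneg D)
    have h6 := mul_le_mul_of_nonneg_left hDle (fnorm_nonneg D)
    nlinarith
  have hkey : V * Yᴴ - Matrix.vecMulVec a (star (Y.mulVec z))
      = Matrix.vecMulVec (D.mulVec zstar) (star zstar) + (σ : ℂ) • (D * Wᴴ) := by
    have h1 : V * Yᴴ - Matrix.vecMulVec a (star (Y.mulVec z)) = D * Yᴴ := by
      rw [hD, Matrix.sub_mul, Matrix.star_mulVec, Matrix.vecMulVec_mul]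
    rw [h1, hY, Matrix.conjTranspose_add, Matrix.conjTranspose_smul, Matrix.mul_add,
      Matrix.conjTranspose_vecMulVec, star_star, Matrix.mul_vecMulVec, Matrix.mul_smul]
    simp
  have hfin : fnorm (V * Yᴴ - Matrix.vecMulVec a (star (Y.mulVec z)))
      ≤ n * (6 * ε + σ * opNorm W / n) * fnorm D := by
    rw [hkey]
    refine (fnorm_add_le _ _).trans ?_
    rw [fnorm_vecMulVec, fnorm_smul, hes, Complex.norm_real, Real.norm_eq_abs, abs_of_pos hσ]
    have h1 := mul_le_mul_of_nonneg_right hDzs hs0.le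
    have h2 := mul_le_mul_of_nonneg_left (fnorm_mul_op_le W D) hσ.le
    have h3 : n * (6 * ε + σ * opNorm W / n) * fnorm D
        = 6 * ε * (s ^ 2 * fnorm D) + σ * (opNorm W * fnorm D) := by
      rw [hs]; field_simp
    have h4 : 0 ≤ ε * (s ^ 2 * fnorm D) := by have := fnorm_nonneg D; positivity
    rw [h3]
    nlinarith
  calc lossM (V * Yᴴ) (Y.mulVec z)
      ≤ fnorm (V * Yᴴ - Matrix.vecMulVec a (star (Y.mulVec z))) ^ 2 / n := by
        refine csInf_le ⟨0, ?_⟩ ⟨a, ha, rfl⟩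
        rintro _ ⟨a', _, rfl⟩
        positivity
    _ ≤ (n * (6 * ε + σ * opNorm W / n) * fnorm D) ^ 2 / n :=
        div_le_div_of_nonneg_right (pow_le_pow_left₀ (fnorm_nonneg _) hfin 2) hn0.le
    _ = (n : ℝ) ^ 2 * (6 * ε + σ * opNorm W / n) ^ 2 * lossM V z := by
        rw [hloss]; ring

end PhaseSync
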